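/- Let ρ > 0, β > 0, T, c₀, c_s, c_h be real numbers, and let A be the real 9×9 matrix (acting on the state (ρ, p, J₁, v₁, v₂, v₃, A₁₁, A₂₁, A₃₁)) whose only nonzero entries are: A(1,4) = ρ; A(2,3) = β c_h², A(2,4) = ρ c₀²; A(3,1) = −T/ρ, A(3,2) = 1/β; A(4,2) = 1/ρ, A(4,7) = (4/3) c_s²; A(5,8) = c_s²; A(6,9) = c_s²; A(7,4) = 1; A(8,5) = 1; A(9,6) = 1. Then the characteristic polynomial of A equals X (X² − c_s²)² (X⁴ − C X² + D), where C = c₀² + c_h² + (4/3) c_s² and D = c_h² ((4/3) c_s² + β T / ρ). In particular A has eight nonzero eigenvalues: ±c_s (each with multiplicity two, corresponding to shear waves) and the four roots λ of λ⁴ − C λ² + D = 0 (corresponding to heat waves and longitudinal pressure waves). -/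

import Mathlib

open Matrix Polynomial

/-!
Reversing the sign of the flux variables `(J, v)` while keeping `(ρ, p, A)` fixed turns the
coefficient matrix into its negative, so in coordinates adapted to this splitting it is
anti-diagonal, with off-diagonal blocks `B : 5 × 4` and `E : 4 × 5`. Its eigenvalues therefore are
`0` (once, because `5 = 4 + 1`) and the square roots of those of the `4 × 4` matrix `E * B`. The
latter is the direct sum of a `2 × 2` block on `(J, v₁)`, with trace `C` and determinant `D`, and
the scalar block `c_s²` on the transverse velocities `(v₂, v₃)`.
-/

section AntiDiagonal

variable {R m n : Type*} [CommRing R] [Fintype m] [DecidableEq m] [Fintype n] [DecidableEq n]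

theorem expand_charpoly (k : ℕ) (M : Matrix n n R) :
    expand R k M.charpoly = (scalar n (X ^ k) - M.map C).det := by
  rw [charpoly, AlgHom.map_det]
  congr 1
  ext1 i j
  obtain rfl | hij := eq_or_ne i j
  · simp
  · simp [hij]

theorem X_pow_mul_charpoly_fromBlocks_zero₁₁_zero₂₂ (A : Matrix m n R) (B : Matrix n m R) :
    X ^ Fintype.card n * (fromBlocks 0 A B 0).charpoly =
      X ^ Fintype.card m * expand R 2 (B * A).charpoly := by
  let N : Matrix (m ⊕ n) (m ⊕ n) R[X] := fromBlocks 1 (A.map C) 0 (scalar n X)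
  have charmatrix_mul_N : (fromBlocks 0 A B 0).charmatrix * N =
      fromBlocks (scalar m X) 0 (-B.map C) (scalar n (X ^ 2) - (B * A).map C) := by
    rw [charmatrix_fromBlocks, fromBlocks_multiply]
    simp [sub_eq_neg_add, -scalar_apply, scalar_comm, Commute.all, pow_two]
  have det_N : N.det = X ^ Fintype.card n := by
    simp [N, det_fromBlocks_zero₂₁]
  rw [charpoly, mul_comm, ← det_N, ← det_mul, charmatrix_mul_N, det_fromBlocks_zero₁₂,
    expand_charpoly]
  simp

theorem charpoly_fromBlocks_zero₁₁_zero₂₂_of_le (A : Matrix m n R) (B : Matrix n m R)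
    (hle : Fintype.card n ≤ Fintype.card m) :
    (fromBlocks 0 A B 0).charpoly =
      X ^ (Fintype.card m - Fintype.card n) * expand R 2 (B * A).charpoly := by
  rw [← (isRegular_X_pow (Fintype.card n)).left.eq_iff, ← mul_assoc, ← pow_add,
    Nat.add_sub_cancel' hle, X_pow_mul_charpoly_fromBlocks_zero₁₁_zero₂₂]

end AntiDiagonal

theorem isRoot_X_mul_sq_sub_sq_mul {R : Type*} [CommRing R] [IsDomain R] {a c : R} (ha : a ≠ 0)
    (q : R[X]) :
    (X * (X ^ 2 - C (c ^ 2)) ^ 2 * q).IsRoot a ↔ a = c ∨ a = -c ∨ q.IsRoot a := by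
  simp only [IsRoot.def, eval_mul, eval_pow, eval_sub, eval_X, eval_C, mul_eq_zero, ha, false_or,
    pow_eq_zero_iff two_ne_zero, sub_eq_zero, sq_eq_sq_iff_eq_or_eq_neg, or_assoc]

section HPR

variable {K : Type*} [Field K]

/-- The coefficient matrix of the linearized HPR model over an arbitrary field, acting on
`(ρ, p, J₁, v₁, v₂, v₃, A₁₁, A₂₁, A₃₁)`. The factor `4/3` by which `c_s²` enters the longitudinal
stress is replaced by a parameter `κ`, so that no division by `3` is involved. -/
def hprMatrix (κ ρ β T c0 cs ch : K) : Matrix (Fin 9) (Fin 9) K :=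
  !![0,       0,     0,          ρ,        0, 0, 0,          0,    0;
     0,       0,     β * ch^2,   ρ * c0^2, 0, 0, 0,          0,    0;
     -T / ρ,  1/β,   0,          0,        0, 0, 0,          0,    0;
     0,       1/ρ,   0,          0,        0, 0, κ * cs^2,   0,    0;
     0,       0,     0,          0,        0, 0, 0,          cs^2, 0;
     0,       0,     0,          0,        0, 0, 0,          0,    cs^2;
     0,       0,     0,          1,        0, 0, 0,          0,    0;
     0,       0,     0,          0,        1, 0, 0,          0,    0;
     0,       0,     0,          0,        0, 1, 0,          0,    0]

/-- The ordering `((ρ, p, A₁₁), (A₂₁, A₃₁)), ((J₁, v₁), (v₂, v₃))` of the state variables: the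
even ones, preserved by the sign reversal of `(J, v)`, precede the odd ones, and within each parity
the longitudinal variables precede the transverse ones. -/
noncomputable def parityEquiv : (Fin 3 ⊕ Fin 2) ⊕ (Fin 2 ⊕ Fin 2) ≃ Fin 9 :=
  Equiv.ofBijective (Sum.elim (Sum.elim ![0, 1, 6] ![7, 8]) (Sum.elim ![2, 3] ![4, 5])) (by decide)

/-- The longitudinal part of `hprMatrix` mapping `(J₁, v₁)` to `(ρ, p, A₁₁)`. -/
def longitudinalOddToEven (ρ β c0 ch : K) : Matrix (Fin 3) (Fin 2) K :=
  !![0, ρ; β * ch^2, ρ * c0^2; 0, 1]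

/-- The longitudinal part of `hprMatrix` mapping `(ρ, p, A₁₁)` to `(J₁, v₁)`. -/
def longitudinalEvenToOdd (κ ρ β T cs : K) : Matrix (Fin 2) (Fin 3) K :=
  !![-T / ρ, 1/β, 0; 0, 1/ρ, κ * cs^2]

theorem hprMatrix_submatrix_parityEquiv (κ ρ β T c0 cs ch : K) :
    (hprMatrix κ ρ β T c0 cs ch).submatrix parityEquiv parityEquiv =
      fromBlocks 0 (fromBlocks (longitudinalOddToEven ρ β c0 ch) 0 0 1)
        (fromBlocks (longitudinalEvenToOdd κ ρ β T cs) 0 0 (scalar (Fin 2) (cs ^ 2))) 0 := by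
  ext ((i | i) | (i | i)) ((j | j) | (j | j)) <;> fin_cases i <;> fin_cases j <;>
    simp [hprMatrix, parityEquiv, longitudinalOddToEven, longitudinalEvenToOdd]

theorem longitudinalEvenToOdd_mul_longitudinalOddToEven {ρ β : K} (κ T c0 cs ch : K) (hρ : ρ ≠ 0)
    (hβ : β ≠ 0) :
    longitudinalEvenToOdd κ ρ β T cs * longitudinalOddToEven ρ β c0 ch =
      !![ch ^ 2, -T + β⁻¹ * (ρ * c0 ^ 2); ρ⁻¹ * (β * ch ^ 2), c0 ^ 2 + κ * cs ^ 2] := by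
  simp [longitudinalEvenToOdd, longitudinalOddToEven, hρ, hβ]

theorem charpoly_longitudinalEvenToOdd_mul_longitudinalOddToEven {ρ β : K} (κ T c0 cs ch : K)
    (hρ : ρ ≠ 0) (hβ : β ≠ 0) :
    (longitudinalEvenToOdd κ ρ β T cs * longitudinalOddToEven ρ β c0 ch).charpoly =
      X ^ 2 - C (c0 ^ 2 + ch ^ 2 + κ * cs ^ 2) * X
        + C (ch ^ 2 * (κ * cs ^ 2 + β * T / ρ)) := by
  have trace_eq : ch ^ 2 + (c0 ^ 2 + κ * cs ^ 2) = c0 ^ 2 + ch ^ 2 + κ * cs ^ 2 := by ring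
  have det_eq : ch ^ 2 * (c0 ^ 2 + κ * cs ^ 2) - (-T + β⁻¹ * (ρ * c0 ^ 2)) * (ρ⁻¹ * (β * ch ^ 2)) =
      ch ^ 2 * (κ * cs ^ 2 + β * T / ρ) := by
    field_simp
    ring
  rw [longitudinalEvenToOdd_mul_longitudinalOddToEven κ T c0 cs ch hρ hβ, charpoly_fin_two,
    trace_fin_two_of, det_fin_two_of, trace_eq, det_eq]

theorem charpoly_hprMatrix {ρ β : K} (κ T c0 cs ch : K) (hρ : ρ ≠ 0) (hβ : β ≠ 0) :
    (hprMatrix κ ρ β T c0 cs ch).charpoly = X * (X ^ 2 - C (cs ^ 2)) ^ 2 *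
      (X ^ 4 - C (c0 ^ 2 + ch ^ 2 + κ * cs ^ 2) * X ^ 2
        + C (ch ^ 2 * (κ * cs ^ 2 + β * T / ρ))) := by
  rw [← charpoly_reindex parityEquiv.symm, reindex_apply, Equiv.symm_symm,
    hprMatrix_submatrix_parityEquiv, charpoly_fromBlocks_zero₁₁_zero₂₂_of_le _ _ (by simp),
    fromBlocks_multiply]
  simp only [Matrix.mul_zero, Matrix.zero_mul, Matrix.mul_one, add_zero, zero_add,
    charpoly_fromBlocks_zero₁₂, scalar_apply, charpoly_diagonal,
    charpoly_longitudinalEvenToOdd_mul_longitudinalOddToEven κ T c0 cs ch hρ hβ]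
  simp only [Finset.prod_const, Finset.card_univ, Fintype.card_fin, Fintype.card_sum, map_mul,
    map_add, map_sub, map_pow, expand_X, expand_C]
  ring

theorem full_system_charpoly_general {ρ β : K} (κ T c0 cs ch : K) (hρ : ρ ≠ 0) (hβ : β ≠ 0) :
    let A := hprMatrix κ ρ β T c0 cs ch
    let Cc := c0 ^ 2 + ch ^ 2 + κ * cs ^ 2
    let D := ch ^ 2 * (κ * cs ^ 2 + β * T / ρ)
    A.charpoly = X * (X ^ 2 - C (cs ^ 2)) ^ 2 * (X ^ 4 - C Cc * X ^ 2 + C D) ∧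
      ∀ lam : K, lam ≠ 0 →
        (A.charpoly.IsRoot lam ↔
          lam = cs ∨ lam = -cs ∨ lam ^ 4 - Cc * lam ^ 2 + D = 0) := by
  intro A Cc D
  have charpoly_eq : A.charpoly =
      X * (X ^ 2 - C (cs ^ 2)) ^ 2 * (X ^ 4 - C Cc * X ^ 2 + C D) :=
    charpoly_hprMatrix κ T c0 cs ch hρ hβ
  refine ⟨charpoly_eq, fun lam hlam => ?_⟩
  rw [charpoly_eq, isRoot_X_mul_sq_sub_sq_mul hlam]
  simp only [IsRoot.def, eval_add, eval_sub, eval_mul, eval_pow, eval_X, eval_C]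

end HPR

/-- The coefficient matrix of the full HPR model (viscous and heat-conducting),
linearized at the rest state, has characteristic polynomial
`X (X² − c_s²)² (X⁴ − C X² + D)` with `C = c₀² + c_h² + (4/3)c_s²` and
`D = c_h²((4/3)c_s² + βT/ρ)`; in particular its nonzero eigenvalues are exactly
`±c_s` (shear waves) and the roots of the quartic `λ⁴ − Cλ² + D = 0`
(heat waves and longitudinal pressure waves). -/
theorem full_system_charpoly (ρ β T c0 cs ch : ℝ) (hρ : 0 < ρ) (hβ : 0 < β) :
    let A : Matrix (Fin 9) (Fin 9) ℝ :=
      !![0,       0,     0,          ρ,        0, 0, 0,            0,    0;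
         0,       0,     β * ch^2,   ρ * c0^2, 0, 0, 0,            0,    0;
         -T / ρ,  1/β,   0,          0,        0, 0, 0,            0,    0;
         0,       1/ρ,   0,          0,        0, 0, (4/3) * cs^2, 0,    0;
         0,       0,     0,          0,        0, 0, 0,            cs^2, 0;
         0,       0,     0,          0,        0, 0, 0,            0,    cs^2;
         0,       0,     0,          1,        0, 0, 0,            0,    0;
         0,       0,     0,          0,        1, 0, 0,            0,    0;
         0,       0,     0,          0,        0, 1, 0,            0,    0]
    let Cc : ℝ := c0 ^ 2 + ch ^ 2 + (4/3) * cs ^ 2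
    let D : ℝ := ch ^ 2 * ((4/3) * cs ^ 2 + β * T / ρ)
    A.charpoly = X * (X ^ 2 - C (cs ^ 2)) ^ 2 * (X ^ 4 - C Cc * X ^ 2 + C D) ∧
      ∀ lam : ℝ, lam ≠ 0 →
        (A.charpoly.IsRoot lam ↔
          lam = cs ∨ lam = -cs ∨ lam ^ 4 - Cc * lam ^ 2 + D = 0) :=
  full_system_charpoly_general (4/3) T c0 cs ch hρ.ne' hβ.ne'
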